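/- For every real ε > 0 there exists t₀ such that for every even integer t ≥ t₀ the following holds. Let V ⊆ 𝔽₂^t be the set of vectors of even Hamming weight and let G₀ be the simple graph on V in which distinct u, v are adjacent iff u · v = 1. Then the number of independent sets of G₀ of cardinality at most t is at most 2^{(5/8 + ε)·t²}. -/

import Mathlib

open Module

section IsotropicTuples

variable {V : Type*} [AddCommGroup V] [Module (ZMod 2) V]

lemma mem_orthogonal_span_range {B : LinearMap.BilinForm (ZMod 2) V} {ι : Type*} {f : ι → V}
    {x : V} (h : ∀ i, B (f i) x = 0) :
    x ∈ B.orthogonal (Submodule.span (ZMod 2) (Set.range f)) := by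
  intro y hy
  have : Submodule.span (ZMod 2) (Set.range f) ≤ LinearMap.ker (B.flip x) := by
    rw [Submodule.span_le]
    rintro _ ⟨i, rfl⟩
    simpa using h i
  simpa using this hy

lemma span_range_eq_sup_tail {n : ℕ} (f : Fin (n + 1) → V) :
    Submodule.span (ZMod 2) (Set.range f) =
      Submodule.span (ZMod 2) (Set.range (Fin.tail f)) ⊔ Submodule.span (ZMod 2) {f 0} := by
  conv_lhs => rw [← Fin.cons_self_tail f]
  rw [Fin.range_cons, Submodule.span_insert, sup_comm]

variable [Fintype V]

open Classical in
/-- The `n`-tuples of pairwise `B`-orthogonal, self-orthogonal vectors spanning a subspace of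
dimension `d`. -/
noncomputable def isotropicTuples (B : LinearMap.BilinForm (ZMod 2) V) (n d : ℕ) :
    Finset (Fin n → V) :=
  {f | (∀ i j, B (f i) (f j) = 0) ∧ finrank (ZMod 2) (Submodule.span (ZMod 2) (Set.range f)) = d}

lemma mem_isotropicTuples {B : LinearMap.BilinForm (ZMod 2) V} {n d : ℕ} {f : Fin n → V} :
    f ∈ isotropicTuples B n d ↔ (∀ i j, B (f i) (f j) = 0) ∧
      finrank (ZMod 2) (Submodule.span (ZMod 2) (Set.range f)) = d := by
  simp [isotropicTuples]

lemma isotropicTuples_eq_empty (B : LinearMap.BilinForm (ZMod 2) V) {n d : ℕ} (h : n < d) :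
    isotropicTuples B n d = ∅ := by
  refine Finset.eq_empty_of_forall_notMem fun f hf => ?_
  have h₁ := (mem_isotropicTuples.1 hf).2
  have h₂ := finrank_range_le_card (R := ZMod 2) f
  rw [Set.finrank, h₁, Fintype.card_fin] at h₂
  omega

/-- A set of tuples whose tails lie in `T` and whose heads lie in a subspace of dimension at most
`k` depending only on the tail has at most `2 ^ k * #T` elements. -/
lemma card_le_two_pow_mul_card_of_tail {n k : ℕ} (s : Finset (Fin (n + 1) → V))
    (T : Finset (Fin n → V)) (W : (Fin n → V) → Submodule (ZMod 2) V)
    (hT : ∀ f ∈ s, Fin.tail f ∈ T) (hW : ∀ f ∈ s, f 0 ∈ W (Fin.tail f))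
    (hk : ∀ g ∈ T, finrank (ZMod 2) (W g) ≤ k) :
    s.card ≤ 2 ^ k * T.card := by
  classical
  refine Finset.card_le_mul_card_image_of_maps_to hT _ fun g hg => ?_
  have hcard : (Finset.univ.filter (· ∈ W g)).card = 2 ^ finrank (ZMod 2) (W g) := by
    rw [← Fintype.card_subtype, ← Nat.card_eq_fintype_card]
    simpa using Module.natCard_eq_pow_finrank (K := ZMod 2) (V := W g)
  calc _ ≤ (Finset.univ.filter (· ∈ W g)).card := by
        refine Finset.card_le_card_of_injOn (fun f => f 0) ?_ ?_
        · intro f hf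
          simp only [Finset.coe_filter, Set.mem_ofPred_eq] at hf
          simpa [← hf.2] using hW f hf.1
        · intro f hf f' hf' h
          simp only [Finset.coe_filter, Set.mem_ofPred_eq] at hf hf'
          rw [← Fin.cons_self_tail f, ← Fin.cons_self_tail f', hf.2, hf'.2]
          simp only at h
          rw [h]
    _ = 2 ^ finrank (ZMod 2) (W g) := hcard
    _ ≤ 2 ^ k := Nat.pow_le_pow_right two_pos (hk g hg)

lemma card_isotropicTuples_filter_mem_span (B : LinearMap.BilinForm (ZMod 2) V) (n d : ℕ)
    [DecidablePred fun f : Fin (n + 1) → V =>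
      f 0 ∈ Submodule.span (ZMod 2) (Set.range (Fin.tail f))] :
    ((isotropicTuples B (n + 1) d).filter
      fun f => f 0 ∈ Submodule.span (ZMod 2) (Set.range (Fin.tail f))).card ≤
      2 ^ d * (isotropicTuples B n d).card := by
  refine card_le_two_pow_mul_card_of_tail _ _
    (fun g => Submodule.span (ZMod 2) (Set.range g)) ?_ ?_ ?_
  · intro f hf
    obtain ⟨hf, h0⟩ := Finset.mem_filter.1 hf
    obtain ⟨hB, hd⟩ := mem_isotropicTuples.1 hf
    refine mem_isotropicTuples.2 ⟨fun i j => hB _ _, ?_⟩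
    rwa [span_range_eq_sup_tail, sup_eq_left.2 (by simpa using h0)] at hd
  · exact fun f hf => (Finset.mem_filter.1 hf).2
  · exact fun g hg => (mem_isotropicTuples.1 hg).2.le

lemma card_isotropicTuples_filter_notMem_span {B : LinearMap.BilinForm (ZMod 2) V}
    (hB : B.Nondegenerate) (n d : ℕ)
    [DecidablePred fun f : Fin (n + 1) → V =>
      f 0 ∉ Submodule.span (ZMod 2) (Set.range (Fin.tail f))] :
    ((isotropicTuples B (n + 1) (d + 1)).filter
      fun f => f 0 ∉ Submodule.span (ZMod 2) (Set.range (Fin.tail f))).card ≤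
      2 ^ (finrank (ZMod 2) V - d) * (isotropicTuples B n d).card := by
  refine card_le_two_pow_mul_card_of_tail _ _
    (fun g => B.orthogonal (Submodule.span (ZMod 2) (Set.range g))) ?_ ?_ ?_
  · intro f hf
    obtain ⟨hf, h0⟩ := Finset.mem_filter.1 hf
    obtain ⟨hB, hd⟩ := mem_isotropicTuples.1 hf
    refine mem_isotropicTuples.2 ⟨fun i j => hB _ _, ?_⟩
    rw [span_range_eq_sup_tail, Submodule.finrank_sup_span_singleton h0] at hd
    omega
  · intro f hf
    exact mem_orthogonal_span_range
      fun i => (mem_isotropicTuples.1 (Finset.mem_filter.1 hf).1).1 _ _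
  · intro g hg
    rw [LinearMap.BilinForm.finrank_orthogonal hB, (mem_isotropicTuples.1 hg).2]

lemma card_isotropicTuples_succ_succ_le {B : LinearMap.BilinForm (ZMod 2) V}
    (hB : B.Nondegenerate) (n d : ℕ) :
    (isotropicTuples B (n + 1) (d + 1)).card ≤
      2 ^ (d + 1) * (isotropicTuples B n (d + 1)).card +
      2 ^ (finrank (ZMod 2) V - d) * (isotropicTuples B n d).card := by
  classical
  rw [← Finset.card_filter_add_card_filter_not
    (p := fun f => f 0 ∈ Submodule.span (ZMod 2) (Set.range (Fin.tail f)))]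
  exact add_le_add (card_isotropicTuples_filter_mem_span B n _)
    (card_isotropicTuples_filter_notMem_span hB n d)

lemma card_isotropicTuples_zero_right_le_one (B : LinearMap.BilinForm (ZMod 2) V) (n : ℕ) :
    (isotropicTuples B n 0).card ≤ 1 := by
  refine Finset.card_le_one.2 fun f hf g hg => ?_
  have key : ∀ f ∈ isotropicTuples B n 0, f = 0 := by
    intro f hf
    have h := Submodule.finrank_eq_zero.1 (mem_isotropicTuples.1 hf).2
    funext i
    simpa [h] using Submodule.subset_span (R := ZMod 2) (Set.mem_range_self (f := f) i)
  rw [key f hf, key g hg]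

lemma card_isotropicTuples_le {B : LinearMap.BilinForm (ZMod 2) V} (hB : B.Nondegenerate)
    (n d : ℕ) :
    (isotropicTuples B n d).card ≤
      2 ^ (n + d * (n - d) + ∑ i ∈ Finset.range d, (finrank (ZMod 2) V - i)) := by
  induction n generalizing d with
  | zero =>
    rcases d with _ | d
    · exact (card_isotropicTuples_zero_right_le_one B 0).trans Nat.one_le_two_pow
    · simp [isotropicTuples_eq_empty B (Nat.succ_pos d)]
  | succ n ih =>
    rcases d with _ | d
    · exact (card_isotropicTuples_zero_right_le_one B _).trans Nat.one_le_two_pow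
    rcases lt_or_ge n d with hnd | hnd
    · simp [isotropicTuples_eq_empty B (Nat.succ_lt_succ hnd)]
    refine (card_isotropicTuples_succ_succ_le hB n d).trans ?_
    obtain ⟨k, rfl⟩ := Nat.exists_eq_add_of_le hnd
    set S := ∑ i ∈ Finset.range (d + 1), (finrank (ZMod 2) V - i) with hS
    have hsub : d + k + 1 - (d + 1) = k := by omega
    have h₁ : 2 ^ (d + 1) * (isotropicTuples B (d + k) (d + 1)).card ≤
        2 ^ (d + k + (d + 1) * k + S) := by
      rcases k with _ | k
      · simp [isotropicTuples_eq_empty B (Nat.lt_succ_self d)]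
      · refine (Nat.mul_le_mul_left _ (ih (d + 1))).trans ?_
        rw [← pow_add]
        refine Nat.pow_le_pow_right two_pos ?_
        rw [show d + (k + 1) - (d + 1) = k by omega, ← hS]
        exact le_of_eq (by ring)
    have h₂ : 2 ^ (finrank (ZMod 2) V - d) * (isotropicTuples B (d + k) d).card ≤
        2 ^ (d + k + (d + 1) * k + S) := by
      refine (Nat.mul_le_mul_left _ (ih d)).trans ?_
      rw [← pow_add]
      refine Nat.pow_le_pow_right two_pos ?_
      rw [hS, Finset.sum_range_succ, Nat.add_sub_cancel_left]
      nlinarith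
    rw [hsub]
    calc _ ≤ 2 ^ (d + k + (d + 1) * k + S) + 2 ^ (d + k + (d + 1) * k + S) := add_le_add h₁ h₂
      _ = 2 ^ (d + k + 1 + (d + 1) * k + S) := by ring

lemma two_mul_finrank_span_le {B : LinearMap.BilinForm (ZMod 2) V} (hB : B.Nondegenerate)
    {ι : Type*} {f : ι → V} (hf : ∀ i j, B (f i) (f j) = 0) :
    2 * finrank (ZMod 2) (Submodule.span (ZMod 2) (Set.range f)) ≤ finrank (ZMod 2) V := by
  have hle : Submodule.span (ZMod 2) (Set.range f) ≤
      B.orthogonal (Submodule.span (ZMod 2) (Set.range f)) := by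
    rw [Submodule.span_le]
    rintro _ ⟨i, rfl⟩
    exact mem_orthogonal_span_range fun j => hf j i
  have h := Submodule.finrank_mono hle
  rw [LinearMap.BilinForm.finrank_orthogonal hB] at h
  have := Submodule.finrank_le (Submodule.span (ZMod 2) (Set.range f))
  omega

lemma isotropic_exponent_le {m d : ℕ} (hd : d ≤ m) :
    2 * (2 * m + d * (2 * m - d) + ∑ i ∈ Finset.range d, (2 * m - i)) ≤ 5 * m ^ 2 + 5 * m := by
  have hsum : ∀ k ≤ 2 * m,
      2 * (∑ i ∈ Finset.range k, ((2 * m - i : ℕ) : ℤ)) = 4 * m * k - k ^ 2 + k := by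
    intro k hk
    induction k with
    | zero => simp
    | succ k ih =>
      rw [Finset.sum_range_succ, mul_add, ih (by omega), Nat.cast_sub (by omega)]
      push_cast
      ring
  have h := hsum d (by omega)
  zify [show d ≤ 2 * m by omega] at hd ⊢
  rw [mul_add, h]
  nlinarith [mul_nonneg (sub_nonneg.2 hd) (sub_nonneg.2 hd), Int.natCast_nonneg d,
    mul_nonneg (sub_nonneg.2 hd) (Int.natCast_nonneg d)]

lemma card_totallyIsotropic_tuples_le {B : LinearMap.BilinForm (ZMod 2) V} (hB : B.Nondegenerate)
    {m : ℕ} (hV : finrank (ZMod 2) V = 2 * m) :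
    Nat.card {f : Fin (2 * m) → V // ∀ i j, B (f i) (f j) = 0} ≤
      2 ^ (m + (5 * m ^ 2 + 5 * m) / 2) := by
  classical
  rw [Nat.card_eq_fintype_card, Fintype.card_subtype]
  calc _ ≤ ((Finset.range (m + 1)).biUnion fun d => isotropicTuples B (2 * m) d).card := by
        refine Finset.card_le_card fun f hf => ?_
        have hf := (Finset.mem_filter.1 hf).2
        have h := two_mul_finrank_span_le hB hf
        exact Finset.mem_biUnion.2 ⟨_, Finset.mem_range.2 (by omega),
          mem_isotropicTuples.2 ⟨hf, rfl⟩⟩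
    _ ≤ (Finset.range (m + 1)).card * 2 ^ ((5 * m ^ 2 + 5 * m) / 2) := by
        refine Finset.card_biUnion_le_card_mul _ _ _ fun d hd => ?_
        refine (card_isotropicTuples_le hB _ d).trans (Nat.pow_le_pow_right two_pos ?_)
        have := isotropic_exponent_le (Nat.lt_succ_iff.1 (Finset.mem_range.1 hd))
        rw [hV]
        omega
    _ ≤ 2 ^ (m + (5 * m ^ 2 + 5 * m) / 2) := by
        rw [Finset.card_range, pow_add]
        exact Nat.mul_le_mul_right _ Nat.lt_two_pow_self

end IsotropicTuples

lemma dotProductBilin_nondegenerate (K ι : Type*) [Field K] [Fintype ι] :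
    (dotProductBilin K K : LinearMap.BilinForm K (ι → K)).Nondegenerate := by
  classical
  refine ⟨fun v hv => dotProduct_eq_zero v hv, fun v hv => dotProduct_eq_zero v fun w => ?_⟩
  rw [dotProduct_comm]
  exact hv w

lemma sum_mul_self_eq_zero_of_even {ι : Type*} [Fintype ι] (v : ι → ZMod 2)
    (hv : Even (Finset.univ.filter (fun i => v i ≠ 0)).card) : ∑ i, v i * v i = 0 := by
  have h : ∀ a : ZMod 2, a * a = if a ≠ 0 then 1 else 0 := by decide
  simp_rw [h, Finset.sum_boole]
  exact (ZMod.natCast_eq_zero_iff_even).2 hv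

/-- If the finsets satisfying `P` have at most `n` elements and every `n`-tuple from such a finset
is mapped by the injection `φ` to a tuple satisfying `Q`, then the finsets satisfying `P` are at
most one (the empty set) more than the tuples satisfying `Q`. -/
lemma card_finset_le_card_tuples_add_one {α β : Type*} [Finite α] [Finite β] {n : ℕ}
    {P : Finset α → Prop} {Q : (Fin n → β) → Prop} (φ : α → β) (hφ : Function.Injective φ)
    (hP : ∀ S, P S → S.card ≤ n)
    (hQ : ∀ S, P S → ∀ f : Fin n → α, (∀ i, f i ∈ S) → Q (φ ∘ f)) :
    Nat.card {S // P S} ≤ Nat.card {f // Q f} + 1 := by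
  classical
  have key : ∀ S : {S // P S}, S.1.Nonempty → ∃ f : Fin n → α, Set.range f = S.1 := by
    rintro ⟨S, hS⟩ hne
    have : Nonempty S := hne.to_subtype
    obtain ⟨e⟩ : Nonempty (S ↪ Fin n) :=
      Function.Embedding.nonempty_of_card_le (by simpa using hP S hS)
    refine ⟨Subtype.val ∘ Function.invFun e, ?_⟩
    rw [Set.range_comp, (Function.invFun_surjective e.injective).range_eq]
    simp
  choose F hF using key
  have hmem : ∀ S hS i, F S hS i ∈ S.1 := fun S hS i => by
    rw [← Finset.mem_coe, ← hF S hS]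
    exact Set.mem_range_self i
  let G : {S // P S} → Option {f // Q f} := fun S =>
    if hS : S.1.Nonempty then some ⟨φ ∘ F S hS, hQ S.1 S.2 _ (hmem S hS)⟩ else none
  rw [← Finite.card_option]
  refine Nat.card_le_card_of_injective G fun S T h => ?_
  by_cases hS : S.1.Nonempty <;> by_cases hT : T.1.Nonempty
  · simp only [G, hS, hT, dif_pos, Option.some.injEq, Subtype.mk.injEq] at h
    have h := hφ.comp_left h
    refine Subtype.ext (Finset.coe_injective ?_)
    rw [← hF S hS, ← hF T hT, h]
  · simp [G, hS, hT] at h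
  · simp [G, hS, hT] at h
  · rw [Finset.not_nonempty_iff_eq_empty] at hS hT
    exact Subtype.ext (hS.trans hT.symm)

/-- For every `ε > 0` there is `t₀` such that for every even `t ≥ t₀`, the number of
independent sets of cardinality at most `t` in the graph `G₀` (on the even-weight vectors
of `𝔽₂^t`, distinct `u, v` adjacent iff `u ⬝ v = 1`) is at most `2^{(5/8 + ε) t²}`. -/
theorem count_independent_sets (ε : ℝ) (hε : 0 < ε) :
    ∃ t₀ : ℕ, ∀ t : ℕ, t₀ ≤ t → Even t →
      (Nat.card
          {S : Finset {v : Fin t → ZMod 2 //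
              Even (Finset.univ.filter (fun i => v i ≠ 0)).card} //
            S.card ≤ t ∧
            ∀ u ∈ S, ∀ w ∈ S, u ≠ w →
              ∑ i, (u : Fin t → ZMod 2) i * (w : Fin t → ZMod 2) i ≠ 1} : ℝ)
        ≤ (2 : ℝ) ^ ((5 / 8 + ε) * t ^ 2) := by
  refine ⟨⌈3 / ε⌉₊ + 1, fun t ht heven => ?_⟩
  obtain ⟨m, rfl⟩ := heven.two_dvd
  have hnat := (card_finset_le_card_tuples_add_one (n := 2 * m)
    (P := fun S : Finset {v : Fin (2 * m) → ZMod 2 //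
        Even (Finset.univ.filter (fun i => v i ≠ 0)).card} => S.card ≤ 2 * m ∧
          ∀ u ∈ S, ∀ w ∈ S, u ≠ w →
            ∑ i, (u : Fin (2 * m) → ZMod 2) i * (w : Fin (2 * m) → ZMod 2) i ≠ 1)
    (Q := fun f => ∀ i j, dotProductBilin (ZMod 2) (ZMod 2) (f i) (f j) = 0)
    Subtype.val Subtype.val_injective (fun S hS => hS.1) (fun S hS f hf i j => by
      change ∑ k, (f i).1 k * (f j).1 k = 0
      by_cases hij : f i = f j
      · rw [hij]
        exact sum_mul_self_eq_zero_of_even _ (f j).2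
      · have h01 : ∀ a : ZMod 2, a ≠ 1 → a = 0 := by decide
        exact h01 _ (hS.2 _ (hf i) _ (hf j) hij))).trans
    (Nat.add_le_add_right (card_totallyIsotropic_tuples_le (dotProductBilin_nondegenerate _ _)
      (by simp)) 1)
  have hpow : 2 ^ (m + (5 * m ^ 2 + 5 * m) / 2) + 1 ≤ 2 ^ (m + (5 * m ^ 2 + 5 * m) / 2 + 1) := by
    have := Nat.one_le_two_pow (n := m + (5 * m ^ 2 + 5 * m) / 2)
    rw [pow_succ _ (_ + _ / 2)]
    linarith
  have hreal := (Nat.cast_le (α := ℝ)).2 (hnat.trans hpow)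
  refine hreal.trans ?_
  rw [Nat.cast_pow, Nat.cast_ofNat, ← Real.rpow_natCast]
  refine Real.rpow_le_rpow_of_exponent_le one_le_two ?_
  have hdiv : (((5 * m ^ 2 + 5 * m) / 2 : ℕ) : ℝ) ≤ (5 * m ^ 2 + 5 * m) / 2 := by
    exact_mod_cast Nat.cast_div_le (α := ℝ) (m := 5 * m ^ 2 + 5 * m) (n := 2)
  have htR : 3 / ε + 1 ≤ 2 * (m : ℝ) := by
    have h := (Nat.cast_le (α := ℝ)).2 ht
    push_cast at h
    linarith [Nat.le_ceil (3 / ε)]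
  have hεt : 3 ≤ ε * (2 * m) := by
    have : 3 / ε ≤ 2 * (m : ℝ) := by linarith
    rw [div_le_iff₀ hε] at this
    linarith
  have hone : 1 ≤ 2 * (m : ℝ) := by
    have : 0 < 3 / ε := by positivity
    linarith
  push_cast
  nlinarith [mul_le_mul_of_nonneg_right hεt (show (0 : ℝ) ≤ 2 * m by linarith)]
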